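/- arXiv:1405.1813 — 3 statements merged into one kernel-verified Lean document; each statement's English description precedes it below -/
import Mathlib

section
/- Let b ∈ (0,1) and let d : ℕ → ℝ. Assume the shadowing property: for all integers t ≥ 0 and s ≥ 1, if d(t) ≤ b^{s/9}, then d(t+n) > b^{n/9} for every integer n with 1 ≤ n ≤ 2s. Let m ≥ 0 be an integer and suppose d(n) > b^{n/18} for every integer n ≥ m. Then there exists an integer k with 0 ≤ k ≤ m such that d(k+n) > b^{n/9} for every integer n ≥ 1. -/
/-!
Call `n ≥ 1` *bad* for `k` if `d (k + n) ≤ b ^ (n / 9)`. Consider the times `k ≤ m` all of whose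
bad `n` satisfy `n ≥ k`; `k = 0` is one of them, so there is a largest one. If it had a bad `n`, then
`k + n ≤ 2 n` gives `d (k + n) ≤ b ^ (n / 9) ≤ b ^ ((k + n) / 18)`, which forces `k + n < m`.
By shadowing, every bad `n'` for `k + n` satisfies `n' > 2 n ≥ k + n`, so `k + n` is a larger time
of the same kind, a contradiction. Hence the largest such time has no bad `n`: it is controlled.
-/

open Real

/-- Combinatorial content of the controlled-points lemma: if the recurrence depths
`d n` satisfy the shadowing property and `d n > b^(n/18)` for all `n ≥ m`, then some
time `k ≤ m` is controlled, i.e. `d (k+n) > b^(n/9)` for all `n ≥ 1`. -/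
theorem controlled_point_exists (b : ℝ) (hb : b ∈ Set.Ioo (0 : ℝ) 1) (d : ℕ → ℝ)
    (hshadow : ∀ t s : ℕ, 1 ≤ s → d t ≤ b ^ ((s : ℝ) / 9) →
      ∀ n : ℕ, 1 ≤ n → n ≤ 2 * s → d (t + n) > b ^ ((n : ℝ) / 9))
    (m : ℕ) (hd : ∀ n : ℕ, m ≤ n → d n > b ^ ((n : ℝ) / 18)) :
    ∃ k : ℕ, k ≤ m ∧ ∀ n : ℕ, 1 ≤ n → d (k + n) > b ^ ((n : ℝ) / 9) := by
  classical
  obtain ⟨hb0, hb1⟩ := hb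
  let P : ℕ → Prop := fun k => ∀ n : ℕ, 1 ≤ n → n < k → d (k + n) > b ^ ((n : ℝ) / 9)
  have hP0 : P 0 := fun n _ hn => absurd hn (Nat.not_lt_zero n)
  have hPk : P (Nat.findGreatest P m) := Nat.findGreatest_spec (Nat.zero_le m) hP0
  refine ⟨Nat.findGreatest P m, Nat.findGreatest_le m, ?_⟩
  generalize hk : Nat.findGreatest P m = k at hPk ⊢
  intro n hn
  by_contra hbad
  have hkn : k ≤ n := by
    by_contra h
    exact hbad (hPk n hn (not_le.mp h))
  have hle : d (k + n) ≤ b ^ ((n : ℝ) / 9) := not_lt.mp hbad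
  have hlt : k + n < m := by
    by_contra h
    have h1 := hd (k + n) (not_lt.mp h)
    have h2 : b ^ ((n : ℝ) / 9) ≤ b ^ (((k + n : ℕ) : ℝ) / 18) := by
      apply Real.rpow_le_rpow_of_exponent_ge hb0 hb1.le
      have : (k : ℝ) ≤ n := by exact_mod_cast hkn
      push_cast
      linarith
    linarith
  have hP : P (k + n) := fun n' hn' hlt' => hshadow (k + n) n hn hle n' hn' (by omega)
  have hmax := Nat.le_findGreatest hlt.le hP
  omega
end

section
/- Fix real numbers H ≥ 0 and 0 < λ_m ≤ λ_M. Let S ⊆ [0,H] × [λ_m,λ_M] be nonempty and convex, let Λ = { λ : (h,λ) ∈ S for some h }, and let I = [inf Λ, sup Λ]. Define F_S : ℝ → ℝ by F_S(β) = inf_{ε>0} sup{ h/λ : (h,λ) ∈ S, |λ - β| < ε }, with the convention sup ∅ = 0. Then F_S is continuous on the interval I. -/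
/-!
The spectrum is upper semicontinuous by construction, because a ball around a point near `β` is
contained in a slightly larger ball around `β` (`Fspec_eventually_lt`).

Lower semicontinuity comes from convexity. If `0 ≤ c < d < Fspec S β`, there are points
`p ∈ S` with `p.2` arbitrarily close to `β` and `p.1 / p.2 > d`. For `y ∈ I` close to `β`, say on the right,
there is a fixed `q ∈ S` with `q.2 > β`; the point of the segment `[p, q]` at height `y` has first
coordinate at least `(q.2 - y) / (q.2 - p.2) * p.1`, so its ratio is at least
`(q.2 - y) / (q.2 - p.2) * (p.2 / y) * d`, which tends to `d > c` as `p.2, y → β`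
(`Fspec_eventually_gt_side`, which treats both sides of `β` at once).
-/

open Real

/-- The abstract Lyapunov spectrum functional: `Fspec S β` is the infimum over `ε > 0`
of `sup { h/λ : (h,λ) ∈ S, |λ - β| < ε }`, with the convention `sup ∅ = 0`
(which is Mathlib's convention for `sSup` on `ℝ`). -/
noncomputable def Fspec (S : Set (ℝ × ℝ)) (β : ℝ) : ℝ :=
  ⨅ ε : {ε : ℝ // 0 < ε},
    sSup {r : ℝ | ∃ p ∈ S, |p.2 - β| < (ε : ℝ) ∧ r = p.1 / p.2}

section FspecAux

open Filter Topology

/-- The ratios `h / l` of the points of `S` whose second coordinate is `ε`-close to `β`. -/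
def ratioSet (S : Set (ℝ × ℝ)) (β ε : ℝ) : Set ℝ :=
  {r : ℝ | ∃ p ∈ S, |p.2 - β| < ε ∧ r = p.1 / p.2}

variable {H lm lM : ℝ} {S : Set (ℝ × ℝ)}

lemma ratioSet_nonneg (hlm : 0 < lm) (hS : S ⊆ Set.Icc (0 : ℝ) H ×ˢ Set.Icc lm lM)
    {β ε r : ℝ} (hr : r ∈ ratioSet S β ε) : 0 ≤ r := by
  obtain ⟨p, hp, -, rfl⟩ := hr
  have h := hS hp
  exact div_nonneg h.1.1 (hlm.le.trans h.2.1)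

lemma ratioSet_bddAbove (hlm : 0 < lm) (hS : S ⊆ Set.Icc (0 : ℝ) H ×ˢ Set.Icc lm lM)
    (β ε : ℝ) : BddAbove (ratioSet S β ε) := by
  refine ⟨H / lm, ?_⟩
  rintro r ⟨p, hp, -, rfl⟩
  have h := hS hp
  exact div_le_div₀ (h.1.1.trans h.1.2) h.1.2 hlm h.2.1

lemma sSup_ratioSet_nonneg (hlm : 0 < lm) (hS : S ⊆ Set.Icc (0 : ℝ) H ×ˢ Set.Icc lm lM)
    (β ε : ℝ) : 0 ≤ sSup (ratioSet S β ε) :=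
  Real.sSup_nonneg fun _ hr => ratioSet_nonneg hlm hS hr

lemma Fspec_le (hlm : 0 < lm) (hS : S ⊆ Set.Icc (0 : ℝ) H ×ˢ Set.Icc lm lM)
    (β : ℝ) {ε : ℝ} (hε : 0 < ε) : Fspec S β ≤ sSup (ratioSet S β ε) := by
  refine ciInf_le (f := fun ε : {ε : ℝ // 0 < ε} => sSup (ratioSet S β ε)) ?_ ⟨ε, hε⟩
  refine ⟨0, ?_⟩
  rintro _ ⟨e, rfl⟩
  exact sSup_ratioSet_nonneg hlm hS β e

lemma Fspec_nonneg (hlm : 0 < lm) (hS : S ⊆ Set.Icc (0 : ℝ) H ×ˢ Set.Icc lm lM)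
    (β : ℝ) : 0 ≤ Fspec S β :=
  Real.iInf_nonneg fun e => sSup_ratioSet_nonneg hlm hS β e

lemma div_le_Fspec (hlm : 0 < lm) (hS : S ⊆ Set.Icc (0 : ℝ) H ×ˢ Set.Icc lm lM)
    {p : ℝ × ℝ} (hp : p ∈ S) : p.1 / p.2 ≤ Fspec S p.2 := by
  have : Nonempty {ε : ℝ // 0 < ε} := ⟨⟨1, one_pos⟩⟩
  refine le_ciInf fun e => le_csSup (ratioSet_bddAbove hlm hS p.2 e) ⟨p, hp, ?_, rfl⟩
  simpa using e.2

lemma Fspec_eventually_lt (hlm : 0 < lm) (hS : S ⊆ Set.Icc (0 : ℝ) H ×ˢ Set.Icc lm lM)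
    {β c : ℝ} (hc : Fspec S β < c) : ∀ᶠ y in 𝓝 β, Fspec S y < c := by
  have : Nonempty {ε : ℝ // 0 < ε} := ⟨⟨1, one_pos⟩⟩
  obtain ⟨⟨ε, hε⟩, h⟩ := exists_lt_of_ciInf_lt hc
  filter_upwards [Metric.ball_mem_nhds β (half_pos hε)] with y hy
  rw [Metric.mem_ball, Real.dist_eq] at hy
  refine (Fspec_le hlm hS y (half_pos hε)).trans_lt (lt_of_le_of_lt ?_ h)
  -- `Real.sSup_le` also covers an empty `ratioSet`, where the supremum is `0`.
  refine Real.sSup_le ?_ (sSup_ratioSet_nonneg hlm hS β ε)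
  rintro r ⟨p, hp, hpy, rfl⟩
  refine le_csSup (ratioSet_bddAbove hlm hS β ε) ⟨p, hp, ?_, rfl⟩
  have := abs_sub_le p.2 y β
  linarith

/-- The condition `0 ≤ c` excludes the value `0` coming from the supremum of the empty set. -/
lemma exists_near_of_lt_Fspec (hlm : 0 < lm) (hS : S ⊆ Set.Icc (0 : ℝ) H ×ˢ Set.Icc lm lM)
    {β c : ℝ} (hc0 : 0 ≤ c) (hc : c < Fspec S β) {ε : ℝ} (hε : 0 < ε) :
    ∃ p ∈ S, |p.2 - β| < ε ∧ c < p.1 / p.2 := by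
  have h := hc.trans_le (Fspec_le hlm hS β hε)
  have hne : (ratioSet S β ε).Nonempty := by
    by_contra hempty
    rw [Set.not_nonempty_iff_eq_empty.1 hempty, Real.sSup_empty] at h
    exact h.not_ge hc0
  obtain ⟨r, ⟨p, hp, hpβ, rfl⟩, hr⟩ := exists_lt_of_lt_csSup hne h
  exact ⟨p, hp, hpβ, hr⟩

/-- The spectrum stays above `c` near `β` on the side of `β` that contains `q.2`: the sign condition
`0 < (y - β) * (q.2 - β)` says that `y` and `q.2` are on the same side of `β`. -/
lemma Fspec_eventually_gt_side (hlm : 0 < lm) (hS : S ⊆ Set.Icc (0 : ℝ) H ×ˢ Set.Icc lm lM)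
    (hconv : Convex ℝ S) {β c : ℝ} (hβ : 0 < β) (hc0 : 0 ≤ c) (hc : c < Fspec S β)
    {q : ℝ × ℝ} (hq : q ∈ S) (hqβ : q.2 ≠ β) :
    ∀ᶠ y in 𝓝 β, 0 < (y - β) * (q.2 - β) → c < Fspec S y := by
  obtain ⟨d, hcd, hd⟩ := exists_between hc
  have hsub : q.2 - β ≠ 0 := sub_ne_zero.2 hqβ
  -- Lower bound for the ratio at height `z.1` on the segment from a point at height `z.2` to `q`.
  have hφ : ContinuousAt (fun z : ℝ × ℝ => (q.2 - z.1) / (q.2 - z.2) * (z.2 / z.1) * d)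
      (β, β) := by
    have hd1 : ContinuousAt (fun z : ℝ × ℝ => (q.2 - z.1) / (q.2 - z.2)) (β, β) :=
      ContinuousAt.div (by fun_prop) (by fun_prop) hsub
    have hd2 : ContinuousAt (fun z : ℝ × ℝ => z.2 / z.1) (β, β) :=
      ContinuousAt.div (by fun_prop) (by fun_prop) hβ.ne'
    exact (hd1.mul hd2).mul continuousAt_const
  have h1 : ∀ᶠ z : ℝ × ℝ in 𝓝 (β, β),
      c < (q.2 - z.1) / (q.2 - z.2) * (z.2 / z.1) * d := by
    refine hφ.eventually (lt_mem_nhds ?_)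
    simpa [div_self hsub, div_self hβ.ne'] using hcd
  have h2 : ∀ᶠ z : ℝ × ℝ in 𝓝 (β, β), 0 < (q.2 - z.1) / (q.2 - z.2) := by
    have : ContinuousAt (fun z : ℝ × ℝ => (q.2 - z.1) / (q.2 - z.2)) (β, β) :=
      ContinuousAt.div (by fun_prop) (by fun_prop) hsub
    refine this.eventually (lt_mem_nhds ?_)
    simp [div_self hsub]
  have h12 := h1.and h2
  rw [nhds_prod_eq] at h12
  filter_upwards [h12.curry, lt_mem_nhds hβ] with y hy hy0 hside
  have h3 : ∀ᶠ x in 𝓝 β, 0 < (y - x) * (q.2 - x) := by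
    have : ContinuousAt (fun x : ℝ => (y - x) * (q.2 - x)) β := by fun_prop
    exact this.eventually (lt_mem_nhds hside)
  obtain ⟨ε, hε, hball⟩ := Metric.eventually_nhds_iff.1 (hy.and h3)
  obtain ⟨p, hp, hpβ, hpd⟩ := exists_near_of_lt_Fspec hlm hS (hc0.trans hcd.le) hd hε
  obtain ⟨⟨hpc, hs⟩, hpos⟩ := hball (y := p.2) (by rwa [Real.dist_eq])
  have hne : q.2 - p.2 ≠ 0 := right_ne_zero_of_mul hpos.ne'
  have ht : 0 < (y - p.2) / (q.2 - p.2) := by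
    rw [← mul_div_mul_right _ _ hne]
    exact div_pos hpos (mul_self_pos.2 hne)
  have hst : (q.2 - y) / (q.2 - p.2) + (y - p.2) / (q.2 - p.2) = 1 := by
    field_simp
    ring
  have hmem := hconv hp hq hs.le ht.le hst
  set s := (q.2 - y) / (q.2 - p.2) with hs_def
  set t := (y - p.2) / (q.2 - p.2) with ht_def
  have hy2 : (s • p + t • q).2 = y := by
    simp only [Prod.snd_add, Prod.smul_snd, smul_eq_mul, hs_def, ht_def]
    field_simp
    ring
  have hle := div_le_Fspec hlm hS hmem
  rw [hy2] at hle
  refine hpc.trans_le (le_trans ?_ hle)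
  have hp2 : 0 < p.2 := hlm.trans_le (hS hp).2.1
  have hq1 : 0 ≤ q.1 := (hS hq).1.1
  have hdp : p.2 * d ≤ p.1 := by
    rw [lt_div_iff₀ hp2] at hpd
    linarith
  have hrw : s * (p.2 / y) * d = s * (p.2 * d) / y := by ring
  rw [hrw]
  refine div_le_div_of_nonneg_right ?_ hy0.le
  simp only [Prod.fst_add, Prod.smul_fst, smul_eq_mul]
  have := mul_le_mul_of_nonneg_left hdp hs.le
  have := mul_nonneg ht.le hq1
  linarith

end FspecAux

open Filter Topology in
/-- Abstract form of Theorem C(a): for a nonempty convex set `S` of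
(entropy, Lyapunov exponent) pairs, the spectrum `Fspec S` is continuous on
the interval `I = [inf Λ, sup Λ]`, where `Λ` is the projection of `S` onto
the second coordinate. -/
theorem Fspec_continuousOn (H lm lM : ℝ) (hH : 0 ≤ H) (hlm : 0 < lm) (hl : lm ≤ lM)
    (S : Set (ℝ × ℝ)) (hS : S ⊆ Set.Icc (0 : ℝ) H ×ˢ Set.Icc lm lM)
    (hne : S.Nonempty) (hconv : Convex ℝ S) :
    ContinuousOn (Fspec S)
      (Set.Icc (sInf {l : ℝ | ∃ h : ℝ, (h, l) ∈ S}) (sSup {l : ℝ | ∃ h : ℝ, (h, l) ∈ S})) := by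
  intro β hβ
  have hΛ : {l : ℝ | ∃ h : ℝ, (h, l) ∈ S}.Nonempty := by
    obtain ⟨p, hp⟩ := hne
    exact ⟨p.2, p.1, hp⟩
  have hβ0 : 0 < β := by
    refine hlm.trans_le (le_trans (le_csInf hΛ ?_) hβ.1)
    rintro l ⟨h, hl⟩
    exact (hS hl).2.1
  refine tendsto_order.2 ⟨fun c hc => ?_, fun c hc =>
    mem_nhdsWithin_of_mem_nhds (Fspec_eventually_lt hlm hS hc)⟩
  rcases lt_or_ge c 0 with hc0 | hc0
  · exact Eventually.of_forall fun y => hc0.trans_le (Fspec_nonneg hlm hS y)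
  have hright : ∀ᶠ y in 𝓝 β, β < y →
      y ≤ sSup {l : ℝ | ∃ h : ℝ, (h, l) ∈ S} → c < Fspec S y := by
    by_cases hex : ∃ q ∈ S, β < q.2
    · obtain ⟨q, hq, hqβ⟩ := hex
      filter_upwards [Fspec_eventually_gt_side hlm hS hconv hβ0 hc0 hc hq hqβ.ne'] with y hy h _
      exact hy (mul_pos (sub_pos.2 h) (sub_pos.2 hqβ))
    · refine Eventually.of_forall fun y h h' => (hex ?_).elim
      obtain ⟨l, ⟨a, ha⟩, hl⟩ := exists_lt_of_lt_csSup hΛ (h.trans_le h')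
      exact ⟨(a, l), ha, hl⟩
  have hleft : ∀ᶠ y in 𝓝 β, y < β →
      sInf {l : ℝ | ∃ h : ℝ, (h, l) ∈ S} ≤ y → c < Fspec S y := by
    by_cases hex : ∃ q ∈ S, q.2 < β
    · obtain ⟨q, hq, hqβ⟩ := hex
      filter_upwards [Fspec_eventually_gt_side hlm hS hconv hβ0 hc0 hc hq hqβ.ne] with y hy h _
      exact hy (mul_pos_of_neg_of_neg (sub_neg.2 h) (sub_neg.2 hqβ))
    · refine Eventually.of_forall fun y h h' => (hex ?_).elim
      obtain ⟨l, ⟨a, ha⟩, hl⟩ := exists_lt_of_csInf_lt hΛ (h'.trans_lt h)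
      exact ⟨(a, l), ha, hl⟩
  filter_upwards [mem_nhdsWithin_of_mem_nhds hright, mem_nhdsWithin_of_mem_nhds hleft,
    self_mem_nhdsWithin] with y h1 h2 hy
  rcases lt_trichotomy y β with h | rfl | h
  · exact h2 h hy.1
  · exact hc
  · exact h1 h hy.2
end

section
/- Fix real numbers H ≥ 0 and 0 < λ_m ≤ λ_M. Let S ⊆ [0,H] × [λ_m,λ_M] be nonempty and convex, let Λ = { λ : (h,λ) ∈ S for some h }, and let I = [inf Λ, sup Λ]. Define F_S : ℝ → ℝ by F_S(β) = inf_{ε>0} sup{ h/λ : (h,λ) ∈ S, |λ - β| < ε }, with the convention sup ∅ = 0. Then for all β, β' ∈ I and all t ∈ [0,1], min{F_S(β), F_S(β')} ≤ F_S(t·β + (1-t)·β'). -/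
/-!
A level `s ≥ 0` lies strictly below `Fspec S β` only if, arbitrarily close to `λ = β`, the set `S`
contains points with `h / λ > s`, that is, `h > s * λ`. The last condition is affine, so it
survives convex combinations: combining such a point near `β` with one near `β'` gives a
point of `S` near `t * β + (1 - t) * β'` whose ratio exceeds `s`.
-/

open Real

/-- The sign condition on `s` excludes the convention `sup ∅ = 0`, so that the supremum at
scale `ε` is taken over a nonempty set. -/
lemma exists_of_lt_Fspec {S : Set (ℝ × ℝ)} (hS : ∀ p ∈ S, 0 ≤ p.1 ∧ 0 < p.2) {s β ε : ℝ}
    (hs : 0 ≤ s) (hlt : s < Fspec S β) (hε : 0 < ε) :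
    ∃ p ∈ S, |p.2 - β| < ε ∧ s * p.2 < p.1 := by
  have hbdd : BddBelow (Set.range fun ε : {ε : ℝ // 0 < ε} =>
      sSup {r : ℝ | ∃ p ∈ S, |p.2 - β| < (ε : ℝ) ∧ r = p.1 / p.2}) := by
    refine ⟨0, ?_⟩
    rintro _ ⟨δ, rfl⟩
    apply Real.sSup_nonneg
    rintro _ ⟨p, hp, -, rfl⟩
    exact div_nonneg (hS p hp).1 (hS p hp).2.le
  have h1 : s < sSup {r : ℝ | ∃ p ∈ S, |p.2 - β| < ε ∧ r = p.1 / p.2} :=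
    hlt.trans_le (ciInf_le hbdd ⟨ε, hε⟩)
  have hne : {r : ℝ | ∃ p ∈ S, |p.2 - β| < ε ∧ r = p.1 / p.2}.Nonempty := by
    by_contra h
    rw [Set.not_nonempty_iff_eq_empty.mp h, Real.sSup_empty] at h1
    linarith
  obtain ⟨_, ⟨p, hp, hpε, rfl⟩, hsp⟩ := exists_lt_of_lt_csSup hne h1
  exact ⟨p, hp, hpε, (lt_div_iff₀ (hS p hp).2).mp hsp⟩

/-- Abstract form of Lemma 3.3: quasiconcavity of the Lyapunov spectrum,
`min {F(β), F(β')} ≤ F(tβ + (1-t)β')` on `I = [inf Λ, sup Λ]`. -/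
theorem Fspec_quasiconcave (H lm lM : ℝ) (hH : 0 ≤ H) (hlm : 0 < lm) (hl : lm ≤ lM)
    (S : Set (ℝ × ℝ)) (hS : S ⊆ Set.Icc (0 : ℝ) H ×ˢ Set.Icc lm lM)
    (hne : S.Nonempty) (hconv : Convex ℝ S) :
    ∀ β β' : ℝ,
      β ∈ Set.Icc (sInf {l : ℝ | ∃ h : ℝ, (h, l) ∈ S}) (sSup {l : ℝ | ∃ h : ℝ, (h, l) ∈ S}) →
      β' ∈ Set.Icc (sInf {l : ℝ | ∃ h : ℝ, (h, l) ∈ S}) (sSup {l : ℝ | ∃ h : ℝ, (h, l) ∈ S}) →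
      ∀ t : ℝ, t ∈ Set.Icc (0 : ℝ) 1 →
        min (Fspec S β) (Fspec S β') ≤ Fspec S (t * β + (1 - t) * β') := by
  rintro β β' - - t ⟨ht0, ht1⟩
  have hpos : ∀ p ∈ S, 0 ≤ p.1 ∧ 0 < p.2 := fun p hp =>
    ⟨(hS hp).1.1, hlm.trans_le (hS hp).2.1⟩
  have : Nonempty {ε : ℝ // 0 < ε} := ⟨⟨1, one_pos⟩⟩
  refine le_ciInf ?_
  rintro ⟨ε, hε⟩
  by_contra! hlt
  set A : Set ℝ := {r : ℝ | ∃ p ∈ S, |p.2 - (t * β + (1 - t) * β')| < ε ∧ r = p.1 / p.2}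
  have hs : 0 ≤ sSup A := by
    apply Real.sSup_nonneg
    rintro _ ⟨p, hp, -, rfl⟩
    exact div_nonneg (hpos p hp).1 (hpos p hp).2.le
  have hbdd : BddAbove A := by
    refine ⟨H / lm, ?_⟩
    rintro _ ⟨p, hp, -, rfl⟩
    exact div_le_div₀ hH (hS hp).1.2 hlm (hS hp).2.1
  obtain ⟨p, hp, hpβ, hps⟩ := exists_of_lt_Fspec hpos hs (lt_min_iff.mp hlt).1 hε
  obtain ⟨q, hq, hqβ, hqs⟩ := exists_of_lt_Fspec hpos hs (lt_min_iff.mp hlt).2 hε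
  have hr : t • p + (1 - t) • q ∈ S := hconv hp hq ht0 (by linarith) (by ring)
  have combo : ∀ {x y z : ℝ}, x < z → y < z → t * x + (1 - t) * y < z :=
    fun {_ _ z} hx hy =>
      convex_Iio (𝕜 := ℝ) z (Set.mem_Iio.mpr hx) (Set.mem_Iio.mpr hy) ht0
        (sub_nonneg.mpr ht1) (add_sub_cancel t 1)
  have hrε : |(t • p + (1 - t) • q).2 - (t * β + (1 - t) * β')| < ε := by
    rw [abs_lt] at hpβ hqβ ⊢
    have h1 := combo hpβ.2 hqβ.2
    have h2 := combo (neg_lt.mp hpβ.1) (neg_lt.mp hqβ.1)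
    simp only [Prod.snd_add, Prod.smul_snd, smul_eq_mul]
    constructor <;> linarith
  have hle := (div_le_iff₀ (hpos _ hr).2).mp (le_csSup hbdd ⟨_, hr, hrε, rfl⟩)
  have h3 := combo (sub_neg.mpr hps) (sub_neg.mpr hqs)
  simp only [Prod.snd_add, Prod.smul_snd, Prod.fst_add, Prod.smul_fst, smul_eq_mul] at hle
  linarith
end
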